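/- arXiv:1712.05539 — 2 statements merged into one kernel-verified Lean document; each statement's English description precedes it below -/
import Mathlib

section
/- Let d ≥ 3 and n ≥ 3. Consider any d-dimensional rectilinear drawing of the complete balanced d-partite d-uniform hypergraph K_{d×n}^d, i.e., an injective map v : Fin d × Fin n → ℝ^d whose image is a set of nd points in general position in ℝ^d (no d+1 of the points lie on a common hyperplane), where for each i ∈ Fin d the set {v(i,j) : j ∈ Fin n} is the i-th part. Then the number of crossing pairs of hyperedges, i.e., the number of unordered pairs {f, g} of functions f, g : Fin d → Fin n with f(i) ≠ g(i) for every i ∈ Fin d such that the intrinsic (relative) interiors of the convex hulls of {v(i, f(i)) : i ∈ Fin d} and {v(i, g(i)) : i ∈ Fin d} have a common point, is at least n^d (n-1)^d / 6^(⌈d/2⌉ + 1). -/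
theorem bu_two (F : ℂ × ℝ → ℂ) (hF : Continuous F) (hodd : ∀ p, F (-p) = -F p) :
    ∃ p, p ≠ 0 ∧ F p = 0 := by
  by_contra! hne
  let G : C(ℂ, ℂ) := ⟨fun z => F (z, max 0 (1 - ‖z‖)), by fun_prop⟩
  have hG : ∀ z, G z ≠ 0 := by
    intro z
    apply hne
    intro h
    have h1 := congrArg Prod.fst h
    have h2 := congrArg Prod.snd h
    simp only [Prod.fst_zero, Prod.snd_zero] at h1 h2
    subst h1
    simp at h2
  have hG1 : ∀ z : ℂ, ‖z‖ = 1 → G (-z) = - G z := by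
    intro z hz
    have := hodd (z, 0)
    simp only [Prod.neg_mk, neg_zero] at this
    simp [G, hz, this]
  obtain ⟨g, ⟨-, hg⟩, -⟩ := Complex.isCoveringMapOn_exp.existsUnique_continuousMap_lifts G
    (a₀ := 0) (e₀ := Complex.log (G 0)) (by simp [Complex.exp_log (hG 0)]) (fun z => hG z)
  have hg' : ∀ z, Complex.exp (g z) = G z := fun z => congrFun hg z
  have key : ∀ z : ℂ, ‖z‖ = 1 → ∃ m : ℤ, g (-z) - g z = (2 * m + 1) * (Real.pi * Complex.I) := by
    intro z hz
    have h1 : Complex.exp (g (-z) - g z - Real.pi * Complex.I) = 1 := by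
      rw [Complex.exp_sub, Complex.exp_sub, hg', hg', hG1 z hz, Complex.exp_pi_mul_I]
      have := hG z
      field_simp
    rw [Complex.exp_eq_one_iff] at h1
    obtain ⟨m, hm⟩ := h1
    exact ⟨m, by linear_combination hm⟩
  have hconn : IsPreconnected (Metric.sphere (0:ℂ) 1) :=
    isPreconnected_sphere (by rw [Complex.rank_real_complex]; norm_num) 0 1
  let h : ℂ → ℝ := fun z => ((g (-z) - g z).im)
  have hc : Continuous h := by fun_prop
  have him := hconn.image h hc.continuousOn
  have hnz : ∀ z : ℂ, ‖z‖ = 1 → h z ≠ 0 := by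
    intro z hz h0
    obtain ⟨m, hm⟩ := key z hz
    have : h z = (2 * m + 1) * Real.pi := by
      simp only [h, hm]
      simp
    rw [h0] at this
    have h3 : ((2 * m + 1 : ℤ) : ℝ) = 0 := by
      push_cast
      rcases mul_eq_zero.1 this.symm with h | h
      · exact h
      · exact absurd h Real.pi_ne_zero
    have h4 : (2 * m + 1 : ℤ) = 0 := by exact_mod_cast h3
    omega
  have hn : h (-1) = - h 1 := by simp [h]
  have ho := him.ordConnected
  have m1 : h 1 ∈ h '' Metric.sphere (0:ℂ) 1 := ⟨1, by simp, rfl⟩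
  have m2 : h (-1) ∈ h '' Metric.sphere (0:ℂ) 1 := ⟨-1, by simp, rfl⟩
  have : (0:ℝ) ∈ h '' Metric.sphere (0:ℂ) 1 := by
    rcases le_total 0 (h 1) with h0 | h0
    · exact ho.out m2 m1 ⟨by linarith, h0⟩
    · exact ho.out m1 m2 ⟨h0, by linarith⟩
  obtain ⟨z, hz, hz0⟩ := this
  exact hnz z (by simpa using hz) hz0

def med3 (c : Fin 3 → ℝ) : ℝ := max (min (c 0) (c 1)) (min (max (c 0) (c 1)) (c 2))

theorem med3_neg (c : Fin 3 → ℝ) : med3 (-c) = - med3 c := by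
  simp only [med3, Pi.neg_apply]
  grind

theorem med3_zero_aux (x y z : ℝ) (h : max (min x y) (min (max x y) z) = 0) :
    (x = 0 ∧ 0 ≤ y ∧ z ≤ 0) ∨ (x = 0 ∧ y ≤ 0 ∧ 0 ≤ z) ∨ (y = 0 ∧ 0 ≤ x ∧ z ≤ 0) ∨
    (y = 0 ∧ x ≤ 0 ∧ 0 ≤ z) ∨ (z = 0 ∧ 0 ≤ x ∧ y ≤ 0) ∨ (z = 0 ∧ x ≤ 0 ∧ 0 ≤ y) := by
  rcases max_cases (min x y) (min (max x y) z) with h1 | h1 <;>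
  rcases min_cases x y with h2 | h2 <;> rcases max_cases x y with h3 | h3 <;>
  rcases min_cases (max x y) z with h4 | h4 <;> grind

theorem med3_zero (c : Fin 3 → ℝ) (h : med3 c = 0) : ∃ p q : Fin 3, p ≠ q ∧ ∃ s t : ℝ,
    0 ≤ s ∧ 0 ≤ t ∧ c = Pi.single p s - Pi.single q t := by
  have aux : ∀ p q r : Fin 3, p ≠ q → p ≠ r → q ≠ r → c r = 0 → 0 ≤ c p → c q ≤ 0 → 
    ∃ p q : Fin 3, p ≠ q ∧ ∃ s t : ℝ,
    0 ≤ s ∧ 0 ≤ t ∧ c = Pi.single p s - Pi.single q t := by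
    intro p q r hpq hpr hqr hr hp hq
    refine ⟨p, q, hpq, c p, - c q, hp, by linarith, ?_⟩
    ext i
    have : i = p ∨ i = q ∨ i = r := by omega
    rcases this with rfl | rfl | rfl
    · simp [hpq]
    · simp [hpq.symm]
    · simp [hpr.symm, hqr.symm, hr]
  rcases med3_zero_aux _ _ _ h with h | h | h | h | h | h
  · exact aux 1 2 0 (by decide) (by decide) (by decide) h.1 h.2.1 h.2.2
  · exact aux 2 1 0 (by decide) (by decide) (by decide) h.1 h.2.2 h.2.1
  · exact aux 0 2 1 (by decide) (by decide) (by decide) h.1 h.2.1 h.2.2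
  · exact aux 2 0 1 (by decide) (by decide) (by decide) h.1 h.2.2 h.2.1
  · exact aux 0 1 2 (by decide) (by decide) (by decide) h.1 h.2.1 h.2.2
  · exact aux 1 0 2 (by decide) (by decide) (by decide) h.1 h.2.2 h.2.1

theorem exists_ker_med {M V : Type*} [AddCommGroup M] [Module ℝ M] [FiniteDimensional ℝ M]
    [AddCommGroup V] [Module ℝ V] [FiniteDimensional ℝ V]
    (Φ : M →ₗ[ℝ] V) (hr : Module.finrank ℝ V + 3 ≤ Module.finrank ℝ M)
    (A B : M →ₗ[ℝ] (Fin 3 → ℝ)) : ∃ m, m ≠ 0 ∧ Φ m = 0 ∧ med3 (A m) = 0 ∧ med3 (B m) = 0 := by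
  have h1 := Φ.finrank_range_add_finrank_ker
  have h2 := Submodule.finrank_le (LinearMap.range Φ)
  have h3 : Module.finrank ℝ (ℂ × ℝ) ≤ Module.finrank ℝ (LinearMap.ker Φ) := by
    rw [Module.finrank_prod, Complex.finrank_real_complex, Module.finrank_self]; omega
  obtain ⟨J, hJ⟩ : ∃ J : ℂ × ℝ →ₗ[ℝ] LinearMap.ker Φ, Function.Injective J := by
    let b := Module.finBasis ℝ (ℂ × ℝ)
    let c := Module.finBasis ℝ (LinearMap.ker Φ)
    refine ⟨b.constr ℝ (fun i => c (Fin.castLE h3 i)), ?_⟩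
    exact b.injective_constr_of_linearIndependent
      (c.linearIndependent.comp _ (Fin.castLE_injective h3))
  let J' : ℂ × ℝ →ₗ[ℝ] M := (LinearMap.ker Φ).subtype ∘ₗ J
  have cA : Continuous (A ∘ₗ J') := LinearMap.continuous_of_finiteDimensional _
  have cB : Continuous (B ∘ₗ J') := LinearMap.continuous_of_finiteDimensional _
  have cm : Continuous med3 := by unfold med3; fun_prop
  obtain ⟨p, hp, hp0⟩ := bu_two (fun p => (med3 ((A ∘ₗ J') p) : ℂ) + (med3 ((B ∘ₗ J') p) : ℂ) * Complex.I)
    (by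
      have := cm.comp cA
      have := cm.comp cB
      simp only [Function.comp_def] at *
      fun_prop)
    (by intro p; simp only [map_neg, med3_neg]; push_cast; ring)
  refine ⟨J' p, ?_, (J p).2, ?_, ?_⟩
  · simpa [J'] using (map_ne_zero_iff J hJ).2 hp
  · simpa using congrArg Complex.re hp0
  · simpa using congrArg Complex.im hp0

theorem pos_of_nonneg {ι V : Type*} [Fintype ι] [AddCommGroup V] [Module ℝ V]
    [FiniteDimensional ℝ V] (W : ι → V)
    (hLI : ∀ s : Finset ι, s.card ≤ Module.finrank ℝ V → LinearIndependent ℝ (fun i : s => W i))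
    (γ : ι → ℝ) (h0 : ∀ i, 0 ≤ γ i) (hne : γ ≠ 0) (hs : ∑ i, γ i • W i = 0) :
    ∃ γ' : ι → ℝ, (∀ i, 0 < γ' i) ∧ ∑ i, γ' i • W i = 0 := by
  classical
  let S : Finset ι := Finset.univ.filter (fun i => γ i ≠ 0)
  have hS : ∑ i ∈ S, γ i • W i = 0 := by
    rw [← hs]
    apply Finset.sum_subset (Finset.subset_univ _)
    intro i _ hi
    have : γ i = 0 := by simpa [S] using hi
    simp [this]
  have hcard : Module.finrank ℝ V ≤ S.card := by
    by_contra! hlt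
    have hl := Fintype.linearIndependent_iff.1 (hLI S hlt.le) (fun i => γ i)
      (by rw [← hS]; exact Finset.sum_coe_sort S (fun i => γ i • W i))
    apply hne
    ext i
    by_cases hi : i ∈ S
    · exact hl ⟨i, hi⟩
    · simpa [S] using hi
  obtain ⟨T, hTS, hT⟩ := Finset.exists_subset_card_eq hcard
  have hspan := (hLI T hT.le).span_eq_top_of_card_eq_finrank' (by simpa using hT)
  have hw : (∑ i ∈ Finset.univ.filter (fun i => i ∉ S), W i) ∈
      Submodule.span ℝ (Set.range fun i : T => W i) := by rw [hspan]; trivial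
  rw [Submodule.mem_span_range_iff_exists_fun] at hw
  obtain ⟨c, hc⟩ := hw
  let r : ι → ℝ := fun i => (if i ∉ S then 1 else 0) - (if h : i ∈ T then c ⟨i, h⟩ else 0)
  have hr : ∑ i, r i • W i = 0 := by
    simp only [r, sub_smul, Finset.sum_sub_distrib]
    rw [sub_eq_zero]
    have e1 : ∑ i, (if i ∉ S then (1:ℝ) else 0) • W i
        = ∑ i ∈ Finset.univ.filter (fun i => i ∉ S), W i := by
      rw [Finset.sum_filter]
      apply Finset.sum_congr rfl
      intro i _
      split_ifs <;> simp
    rw [e1, ← hc]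
    have e2 : ∑ i : T, c i • W i = ∑ i : T, (if h : (i : ι) ∈ T then c ⟨i, h⟩ else 0) • W i := by
      apply Finset.sum_congr rfl
      intro i _
      simp
    rw [e2, Finset.sum_coe_sort T (fun i => (if h : i ∈ T then c ⟨i, h⟩ else 0) • W i)]
    apply Finset.sum_subset (Finset.subset_univ _)
    intro i _ hi
    simp [hi]
  have hev : ∀ᶠ ε : ℝ in nhdsWithin 0 (Set.Ioi 0), ∀ i, 0 < γ i + ε * r i := by
    rw [Filter.eventually_all]
    intro i
    by_cases hi : i ∈ S
    · have hp : 0 < γ i := lt_of_le_of_ne (h0 i) (Ne.symm (by simpa [S] using hi))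
      have : Continuous (fun ε : ℝ => γ i + ε * r i) := by fun_prop
      have h2 := this.tendsto 0
      simp only [zero_mul, add_zero] at h2
      exact (h2.eventually_const_lt hp).filter_mono nhdsWithin_le_nhds
    · filter_upwards [self_mem_nhdsWithin] with ε hε
      have h1 : γ i = 0 := by simpa [S] using hi
      have h2 : r i = 1 := by
        have : i ∉ T := fun h => hi (hTS h)
        simp [r, hi, this]
      rw [h1, h2]
      simpa using hε
  obtain ⟨ε, hε⟩ := hev.exists
  refine ⟨_, hε, ?_⟩
  simp only [add_smul, mul_smul, Finset.sum_add_distrib, ← Finset.smul_sum, hs, hr]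
  simp

theorem mem_intrinsicInterior_of_pos {ι E : Type*} [Fintype ι] [NormedAddCommGroup E]
    [NormedSpace ℝ E] [FiniteDimensional ℝ E] (p : ι → E)
    (hLI : LinearIndependent ℝ (fun i => (p i, (1 : ℝ)))) (w : ι → ℝ) (hw : ∀ i, 0 < w i)
    (hs : ∑ i, w i = 1) : ∑ i, w i • p i ∈ intrinsicInterior ℝ (convexHull ℝ (Set.range p)) := by
  classical
  have hmem : ∀ w : ι → ℝ, (∀ i, 0 ≤ w i) → ∑ i, w i = 1 →
      ∑ i, w i • p i ∈ convexHull ℝ (Set.range p) := by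
    intro w h0 h1
    exact (convex_convexHull ℝ _).sum_mem (fun i _ => h0 i) h1
      (fun i _ => subset_convexHull ℝ _ ⟨i, rfl⟩)
  let L := Fintype.linearCombination ℝ (fun i => (p i, (1 : ℝ)))
  have hL : LinearMap.ker L = ⊥ := by
    rw [LinearMap.ker_eq_bot]
    exact hLI.fintypeLinearCombination_injective
  obtain ⟨Ψ, hΨ⟩ := L.exists_leftInverse_of_injective hL
  have hΨ' : ∀ w : ι → ℝ, ∑ i, w i = 1 → Ψ (∑ i, w i • p i, 1) = w := by
    intro w h1
    have : L w = (∑ i, w i • p i, 1) := by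
      simp only [L, Fintype.linearCombination_apply]
      ext <;> simp [Prod.fst_sum, Prod.snd_sum, h1]
    rw [← this]
    exact congrArg (fun f => f w) hΨ
  have hΨc : Continuous Ψ := LinearMap.continuous_of_finiteDimensional _
  rw [mem_intrinsicInterior]
  have hz := hmem w (fun i => (hw i).le) hs
  refine ⟨⟨_, subset_affineSpan ℝ _ hz⟩, ?_, rfl⟩
  rw [mem_interior]
  refine ⟨{y | ∀ i, 0 < Ψ ((y : E), 1) i}, ?_, ?_, ?_⟩
  · rintro ⟨y, hy⟩ hy'
    rw [affineSpan_convexHull] at hy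
    obtain ⟨u, hu1, hu⟩ := eq_affineCombination_of_mem_affineSpan_of_fintype hy
    rw [Finset.affineCombination_eq_linear_combination _ _ _ hu1] at hu
    subst hu
    simp only [Set.mem_ofPred_eq, hΨ' u hu1] at hy'
    exact hmem u (fun i => (hy' i).le) hu1
  · have : {y : affineSpan ℝ (convexHull ℝ (Set.range p)) | ∀ i, 0 < Ψ ((y : E), 1) i}
        = ⋂ i, {y : affineSpan ℝ (convexHull ℝ (Set.range p)) | 0 < Ψ ((y : E), 1) i} := by ext; simp
    rw [this]
    apply isOpen_iInter_of_finite
    intro i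
    apply isOpen_lt continuous_const
    fun_prop
  · intro i
    show 0 < Ψ (_, 1) i
    rw [hΨ' w hs]
    exact hw i

theorem gen_LI {d n : ℕ} (v : Fin d × Fin n → EuclideanSpace ℝ (Fin d)) (hdn : d + 1 ≤ d * n)
    (hgen : ∀ s : Finset (Fin d × Fin n), s.card = d + 1 →
      AffineIndependent ℝ (fun i : s => v i.1)) (s : Finset (Fin d × Fin n)) (hs : s.card ≤ d + 1) :
    LinearIndependent ℝ (fun i : s => (v i, (1 : ℝ))) := by
  obtain ⟨t, hst, ht⟩ := Finset.exists_superset_card_eq hs (by simpa using hdn)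
  have h1 := hgen t ht
  have h2 : LinearIndependent ℝ (fun i : t => (v i, (1 : ℝ))) := by
    rw [Fintype.linearIndependent_iff]
    intro g hg
    rw [affineIndependent_iff] at h1
    have e1 := congrArg Prod.fst hg
    have e2 := congrArg Prod.snd hg
    simp only [Prod.fst_sum, Prod.snd_sum, Prod.smul_mk, Prod.fst_zero, Prod.snd_zero, smul_eq_mul,
      mul_one] at e1 e2
    intro i
    exact h1 Finset.univ g e2 e1 i (Finset.mem_univ _)
  exact h2.comp (fun i : s => (⟨i, hst i.2⟩ : t)) (fun a b h => by
    apply Subtype.ext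
    exact congrArg (fun x : t => (x : Fin d × Fin n)) h)

def Crs {d n : ℕ} (v : Fin d × Fin n → EuclideanSpace ℝ (Fin d)) (f g : Fin d → Fin n) : Prop :=
  (∀ i : Fin d, f i ≠ g i) ∧
          (intrinsicInterior ℝ (convexHull ℝ (Set.range fun i : Fin d => v (i, f i))) ∩
           intrinsicInterior ℝ (convexHull ℝ (Set.range fun i : Fin d => v (i, g i)))).Nonempty

theorem crossing_of_rel {d n : ℕ} (v : Fin d × Fin n → EuclideanSpace ℝ (Fin d)) (hd : 0 < d)
    (hdn : d + 1 ≤ d * n)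
    (hgen : ∀ s : Finset (Fin d × Fin n), s.card = d + 1 →
      AffineIndependent ℝ (fun i : s => v i.1)) (f g : Fin d → Fin n) (hfg : ∀ i, f i ≠ g i)
    (α β : Fin d → ℝ) (hα : ∀ i, 0 ≤ α i) (hβ : ∀ i, 0 ≤ β i) (hne : ¬ (α = 0 ∧ β = 0))
    (hrel : ∑ i, (α i • (v (i, f i), (1 : ℝ)) - β i • (v (i, g i), (1 : ℝ))) = 0) :
    Crs v f g := by
  classical
  refine ⟨hfg, ?_⟩
  let φ : Fin d ⊕ Fin d → Fin d × Fin n := Sum.elim (fun i => (i, f i)) (fun i => (i, g i))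
  have hφ : Function.Injective φ := by
    rintro (i | i) (j | j) h <;> simp only [φ, Sum.elim_inl, Sum.elim_inr, Prod.mk.injEq] at h
    · rw [h.1]
    · obtain ⟨rfl, h⟩ := h; exact absurd h (hfg _)
    · obtain ⟨rfl, h⟩ := h; exact absurd h.symm (hfg _)
    · rw [h.1]
  let u : Fin d ⊕ Fin d → ℝˣ := Sum.elim (fun _ => 1) (fun _ => -1)
  have hLI : ∀ s : Finset (Fin d ⊕ Fin d), s.card ≤ d + 1 →
      LinearIndependent ℝ (fun i : s => (v (φ i), (1 : ℝ))) := by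
    intro s hs
    have h1 := gen_LI v hdn hgen (s.image φ) (Finset.card_image_le.trans hs)
    exact h1.comp (fun i : s => (⟨φ i, Finset.mem_image_of_mem _ i.2⟩ : (s.image φ : Finset _)))
      (fun a b h => Subtype.ext (hφ (congrArg (fun x : (s.image φ : Finset _) => (x : Fin d × Fin n)) h)))
  have hfr : Module.finrank ℝ (EuclideanSpace ℝ (Fin d) × ℝ) = d + 1 := by
    simp [Module.finrank_prod]
  obtain ⟨γ, hγ, hγs⟩ := pos_of_nonneg (fun i => (u i : ℝ) • (v (φ i), (1 : ℝ)))
    (by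
      intro s hs
      rw [hfr] at hs
      exact (hLI s hs).units_smul (fun i : s => u i))
    (Sum.elim α β) (by rintro (i | i) <;> simp [hα, hβ])
    (by
      intro h
      apply hne
      constructor
      · ext i; exact congrFun h (Sum.inl i)
      · ext i; exact congrFun h (Sum.inr i))
    (by
      rw [← hrel, Fintype.sum_sum_type, Finset.sum_sub_distrib]
      simp [u, φ, sub_eq_add_neg, ← Finset.sum_neg_distrib])
  rw [Fintype.sum_sum_type] at hγs
  have e1 := congrArg Prod.fst hγs
  have e2 := congrArg Prod.snd hγs
  simp [u, φ, Prod.fst_sum, Prod.snd_sum] at e1 e2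
  rw [add_neg_eq_zero] at e1 e2
  have : Nonempty (Fin d) := ⟨⟨0, hd⟩⟩
  have hpos : 0 < ∑ i, γ (Sum.inl i) :=
    Finset.sum_pos (fun i _ => hγ _) Finset.univ_nonempty
  set σ := ∑ i, γ (Sum.inl i) with hσ
  have lf : LinearIndependent ℝ (fun i : Fin d => (v (i, f i), (1 : ℝ))) := by
    have := hLI (Finset.univ.image Sum.inl) (Finset.card_image_le.trans (by simp))
    exact this.comp (fun i : Fin d => ⟨Sum.inl i, by simp⟩) (fun a b h => by simpa using h)
  have lg : LinearIndependent ℝ (fun i : Fin d => (v (i, g i), (1 : ℝ))) := by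
    have := hLI (Finset.univ.image Sum.inr) (Finset.card_image_le.trans (by simp))
    exact this.comp (fun i : Fin d => ⟨Sum.inr i, by simp⟩) (fun a b h => by simpa using h)
  refine ⟨∑ i, (σ⁻¹ * γ (Sum.inl i)) • v (i, f i),
    mem_intrinsicInterior_of_pos _ lf _ (fun i => mul_pos (inv_pos.2 hpos) (hγ _)) ?_, ?_⟩
  · rw [← Finset.mul_sum, ← hσ]; exact inv_mul_cancel₀ hpos.ne'
  · have : ∑ i, (σ⁻¹ * γ (Sum.inl i)) • v (i, f i) = ∑ i, (σ⁻¹ * γ (Sum.inr i)) • v (i, g i) := by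
      simp only [mul_smul, ← Finset.smul_sum, e1]
    rw [this]
    refine mem_intrinsicInterior_of_pos _ lg _ (fun i => mul_pos (inv_pos.2 hpos) (hγ _)) ?_
    rw [← Finset.mul_sum, ← e2]; exact inv_mul_cancel₀ hpos.ne'
def Tmpl {d : ℕ} (i : Fin d) : Finset (Fin 3 × Fin 3) :=
  if i.val < 2 then Finset.univ.filter (fun p => p.1 ≠ p.2) else {(0, 1), (1, 0)}

theorem tmpl_ne {d : ℕ} {i : Fin d} {p : Fin 3 × Fin 3} (h : p ∈ Tmpl i) : p.1 ≠ p.2 := by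
  unfold Tmpl at h
  split_ifs at h
  · simpa using h
  · simp only [Finset.mem_insert, Finset.mem_singleton] at h
    rcases h with rfl | rfl <;> decide

theorem tmpl_swap {d : ℕ} {i : Fin d} {p : Fin 3 × Fin 3} (h : p ∈ Tmpl i) : p.swap ∈ Tmpl i := by
  unfold Tmpl at h ⊢
  split_ifs at h ⊢
  · simpa using Ne.symm (by simpa using h)
  · simp only [Finset.mem_insert, Finset.mem_singleton] at h
    rcases h with rfl | rfl <;> decide

theorem tmpl_card (e : ℕ) :
    (Fintype.piFinset (fun i : Fin (e + 2) => Tmpl i)).card = 36 * 2 ^ e := by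
  rw [Fintype.card_piFinset, Fin.prod_univ_succ, Fin.prod_univ_succ]
  have h : ∀ i : Fin e, (Tmpl (i.succ.succ : Fin (e + 2))).card = 2 := by
    intro i
    simp [Tmpl]
  simp only [h]
  have h0 : (Tmpl (0 : Fin (e + 2))).card = 6 := by
    unfold Tmpl; rw [if_pos (by simp)]; rfl
  have h1 : (Tmpl (Fin.succ 0 : Fin (e + 2))).card = 6 := by
    unfold Tmpl; rw [if_pos (by simp)]; rfl
  rw [h0, h1]
  simp
  ring

theorem exists_tmpl {E : Type*} [AddCommGroup E] [Module ℝ E] [FiniteDimensional ℝ E] (e : ℕ)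
    (hE : Module.finrank ℝ E = e + 3) (w : Fin (e + 2) → Fin 3 → E) :
    ∃ c : Fin (e + 2) → Fin 3 × Fin 3, (∀ i, c i ∈ Tmpl i) ∧ ∃ α β : Fin (e + 2) → ℝ,
      (∀ i, 0 ≤ α i) ∧ (∀ i, 0 ≤ β i) ∧ ¬ (α = 0 ∧ β = 0) ∧
      ∑ i, (α i • w i (c i).1 - β i • w i (c i).2) = 0 := by
  let Φ : (Fin (e + 2) → Fin 3 → ℝ) →ₗ[ℝ] E × (Fin e → ℝ × ℝ) :=
    { toFun := fun C => (∑ i, ∑ j, C i j • w i j,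
        fun k => (C k.succ.succ 2, C k.succ.succ 0 + C k.succ.succ 1))
      map_add' := by
        intro x y
        ext k
        · simp [add_smul, Finset.sum_add_distrib]
        · simp
        · simp; ring
      map_smul' := by
        intro r x
        ext k
        · simp [mul_smul, Finset.smul_sum]
        · simp
        · simp; ring }
  obtain ⟨C, hC, hΦ, hA, hB⟩ := exists_ker_med Φ
    (by
      simp [Module.finrank_prod, hE, Module.finrank_pi_fintype]
      omega)
    (LinearMap.proj 0) (LinearMap.proj (Fin.succ 0))
  have h1 := congrArg Prod.fst hΦ
  have h2 := congrArg Prod.snd hΦ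
  simp only [Φ, LinearMap.coe_mk, AddHom.coe_mk, Prod.fst_zero, Prod.snd_zero] at h1 h2
  have key : ∀ i, ∃ p : Fin 3 × Fin 3, p ∈ Tmpl i ∧ ∃ s t : ℝ, 0 ≤ s ∧ 0 ≤ t ∧
      C i = Pi.single p.1 s - Pi.single p.2 t := by
    intro i
    refine Fin.cases ?_ (fun i => Fin.cases ?_ (fun k => ?_) i) i
    · obtain ⟨p, q, hpq, s, t, hs, ht, h⟩ := med3_zero _ hA
      exact ⟨(p, q), by simpa [Tmpl] using hpq, s, t, hs, ht, h⟩
    · obtain ⟨p, q, hpq, s, t, hs, ht, h⟩ := med3_zero _ hB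
      exact ⟨(p, q), by simpa [Tmpl] using hpq, s, t, hs, ht, h⟩
    · have h3 := congrFun h2 k
      simp only [Pi.zero_apply, Prod.mk_eq_zero] at h3
      obtain ⟨h3, h4⟩ := h3
      rcases le_total 0 (C k.succ.succ 0) with h | h
      · refine ⟨(0, 1), by simp [Tmpl], C k.succ.succ 0, C k.succ.succ 0, h, h, ?_⟩
        ext j
        fin_cases j
        · simp
        · simp; linarith
        · simpa using h3
      · refine ⟨(1, 0), by simp [Tmpl], C k.succ.succ 1, C k.succ.succ 1, by linarith,
          by linarith, ?_⟩
        ext j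
        fin_cases j
        · simp; linarith
        · simp
        · simpa using h3
  choose c hc s t hs ht hCe using key
  refine ⟨c, hc, s, t, hs, ht, ?_, ?_⟩
  · rintro ⟨rfl, rfl⟩
    apply hC
    ext i j
    rw [hCe i]
    simp
  · rw [← h1]
    apply Finset.sum_congr rfl
    intro i _
    rw [hCe i]
    simp [sub_smul, Finset.sum_sub_distrib, Pi.single_apply, ite_smul]

theorem emb_fiber {n : ℕ} (p q : Fin 3) (hpq : p ≠ q) (x y : Fin n) :
    (Finset.univ.filter (fun τ : Fin 3 ↪ Fin n => τ p = x ∧ τ q = y)).card ≤ n - 2 := by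
  classical
  obtain ⟨r, hr1, hr2⟩ : ∃ r : Fin 3, r ≠ p ∧ r ≠ q := by
    revert p q; decide
  by_cases hxy : x = y
  · subst hxy
    rw [Finset.card_eq_zero.2]
    · simp
    · ext τ
      simp only [Finset.mem_filter, Finset.mem_univ, true_and, Finset.notMem_empty, iff_false]
      rintro ⟨h1, h2⟩
      exact hpq (τ.injective (h1.trans h2.symm))
  have hc : (Finset.univ \ {x, y} : Finset (Fin n)).card = n - 2 := by
    rw [Finset.card_sdiff_of_subset (Finset.subset_univ _), Finset.card_pair hxy]; simp
  rw [← hc]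
  apply Finset.card_le_card_of_injOn (fun τ => τ r)
  · intro τ hτ
    simp only [Finset.coe_filter, Finset.mem_univ, true_and] at hτ
    obtain ⟨h1, h2⟩ := hτ
    simp only [Finset.coe_sdiff, Finset.coe_univ, Finset.coe_insert, Finset.coe_singleton,
      Set.mem_sdiff, Set.mem_univ, true_and, Set.mem_insert_iff, Set.mem_singleton_iff, not_or]
    rw [← h1, ← h2]
    exact ⟨fun h => hr1 (τ.injective h), fun h => hr2 (τ.injective h)⟩
  · intro τ hτ τ' hτ' h
    simp only [Finset.coe_filter, Finset.mem_univ, true_and] at hτ hτ'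
    obtain ⟨h1, h2⟩ := hτ
    obtain ⟨h3, h4⟩ := hτ'
    ext j
    have : j = p ∨ j = q ∨ j = r := by omega
    rcases this with rfl | rfl | rfl
    · rw [h1, h3]
    · rw [h2, h4]
    · exact congrArg _ h

theorem Crs.symm {d n : ℕ} {v : Fin d × Fin n → EuclideanSpace ℝ (Fin d)} {f g : Fin d → Fin n}
    (h : Crs v f g) : Crs v g f :=
  ⟨fun i => (h.1 i).symm, by rw [Set.inter_comm]; exact h.2⟩

theorem exists_crossing {e n : ℕ} (v : Fin (e + 2) × Fin n → EuclideanSpace ℝ (Fin (e + 2)))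
    (hdn : e + 2 + 1 ≤ (e + 2) * n)
    (hgen : ∀ s : Finset (Fin (e + 2) × Fin n), s.card = e + 2 + 1 →
      AffineIndependent ℝ (fun i : s => v i.1)) (σ : Fin (e + 2) → (Fin 3 ↪ Fin n)) :
    ∃ c : Fin (e + 2) → Fin 3 × Fin 3, (∀ i, c i ∈ Tmpl i) ∧
      Crs v (fun i => σ i (c i).1) (fun i => σ i (c i).2) := by
  obtain ⟨c, hc, α, β, hα, hβ, hne, hrel⟩ := exists_tmpl
    (E := EuclideanSpace ℝ (Fin (e + 2)) × ℝ) e (by simp [Module.finrank_prod])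
    (fun i j => (v (i, σ i j), (1 : ℝ)))
  exact ⟨c, hc, crossing_of_rel v (by omega) hdn hgen _ _
    (fun i h => tmpl_ne (hc i) ((σ i).injective h)) α β hα hβ hne hrel⟩

theorem count_ordered {e n : ℕ} (v : Fin (e + 2) × Fin n → EuclideanSpace ℝ (Fin (e + 2)))
    (hdn : e + 2 + 1 ≤ (e + 2) * n)
    (hgen : ∀ s : Finset (Fin (e + 2) × Fin n), s.card = e + 2 + 1 →
      AffineIndependent ℝ (fun i : s => v i.1))
    (N : Finset ((Fin (e + 2) → Fin n) × (Fin (e + 2) → Fin n)))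
    (hN : ∀ x, x ∈ N ↔ Crs v x.1 x.2) :
    2 * (n * (n - 1) * (n - 2)) ^ (e + 2) ≤ (n - 2) ^ (e + 2) * (36 * 2 ^ e * N.card) := by
  classical
  let T := Fintype.piFinset (fun i : Fin (e + 2) => Tmpl i)
  let mp : (Fin (e + 2) → (Fin 3 ↪ Fin n)) × (Fin (e + 2) → Fin 3 × Fin 3) →
      (Fin (e + 2) → Fin n) × (Fin (e + 2) → Fin n) :=
    fun x => (fun i => x.1 i (x.2 i).1, fun i => x.1 i (x.2 i).2)
  let P := (Finset.univ ×ˢ T).filter (fun x => mp x ∈ N)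
  have hcard : (Finset.univ : Finset (Fin (e + 2) → (Fin 3 ↪ Fin n))).card
      = (n * (n - 1) * (n - 2)) ^ (e + 2) := by
    rw [Finset.card_univ, Fintype.card_fun, Fintype.card_embedding_eq]
    simp [Nat.descFactorial]
    ring
  have h1 : 2 * (n * (n - 1) * (n - 2)) ^ (e + 2) ≤ P.card := by
    rw [← hcard]
    apply Finset.mul_card_image_le_card_of_maps_to (f := Prod.fst) (fun _ _ => Finset.mem_univ _)
    intro σ _
    obtain ⟨c, hc, hcr⟩ := exists_crossing v hdn hgen σ
    have hne : (σ, c) ≠ (σ, fun i => (c i).swap) := by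
      intro h
      have := congrFun (congrArg Prod.snd h) 0
      exact tmpl_ne (hc 0) (congrArg Prod.fst this)
    refine (Finset.card_pair hne).symm.le.trans (Finset.card_le_card ?_)
    intro x hx
    simp only [Finset.mem_insert, Finset.mem_singleton] at hx
    rcases hx with rfl | rfl
    · simp only [P, T, Finset.mem_filter, Finset.mem_product, Finset.mem_univ, true_and,
        Fintype.mem_piFinset, hN, and_true]
      exact ⟨hc, hcr⟩
    · simp only [P, T, Finset.mem_filter, Finset.mem_product, Finset.mem_univ, true_and,
        Fintype.mem_piFinset, hN, and_true]
      exact ⟨fun i => tmpl_swap (hc i), hcr.symm⟩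
  have h2 : P.card ≤ (n - 2) ^ (e + 2) * (T ×ˢ N).card := by
    apply Finset.card_le_mul_card_image_of_maps_to (f := fun x => (x.2, mp x))
    · intro x hx
      simp only [P, Finset.mem_filter, Finset.mem_product] at hx
      simp only [Finset.mem_product]
      exact ⟨hx.1.2, hx.2⟩
    · rintro ⟨c, f, g⟩ hx
      simp only [Finset.mem_product, T, Fintype.mem_piFinset] at hx
      have h3 : (Fintype.piFinset (fun i => Finset.univ.filter
          (fun τ : Fin 3 ↪ Fin n => τ (c i).1 = f i ∧ τ (c i).2 = g i))).card
          ≤ (n - 2) ^ (e + 2) := by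
        rw [Fintype.card_piFinset]
        calc _ ≤ ∏ i : Fin (e + 2), (n - 2) :=
              Finset.prod_le_prod' (fun i _ => emb_fiber _ _ (tmpl_ne (hx.1 i)) _ _)
          _ = _ := by simp
      refine le_trans ?_ h3
      apply Finset.card_le_card_of_injOn Prod.fst
      · rintro ⟨σ, c'⟩ h
        simp only [Finset.coe_filter, Set.mem_ofPred_eq, Prod.mk.injEq, mp] at h
        obtain ⟨-, rfl, rfl, rfl⟩ := h
        simp
      · rintro ⟨σ, c'⟩ h ⟨σ', c''⟩ h' heq
        simp only [Finset.coe_filter, Set.mem_ofPred_eq, Prod.mk.injEq] at h h'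
        simp only at heq
        rw [heq, h.2.1, h'.2.1]
  rw [Finset.card_product, tmpl_card] at h2
  exact h1.trans h2

theorem pow_bound (e : ℕ) : 36 * 2 ^ e ≤ 6 ^ ((e + 2 + 1) / 2 + 1) := by
  have h : (e + 2 + 1) / 2 + 1 = (e + 1) / 2 + 2 := by omega
  rw [h, pow_add]
  have h1 : 2 ^ e ≤ 2 ^ (2 * ((e + 1) / 2)) := Nat.pow_le_pow_right (by norm_num) (by omega)
  have h2 : 2 ^ (2 * ((e + 1) / 2)) ≤ 6 ^ ((e + 1) / 2) := by
    rw [pow_mul]; exact Nat.pow_le_pow_left (by norm_num) _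
  have := h1.trans h2
  omega




/-- Every `d`-dimensional rectilinear drawing of the complete balanced
`d`-partite `d`-uniform hypergraph `K_{d×n}^d` (vertices in general position in `ℝ^d`,
with the `i`-th part `{v (i, j) : j}`) has at least `n^d (n-1)^d / 6^(⌈d/2⌉+1)` crossing
pairs of hyperedges, for `d ≥ 3` and `n ≥ 3`. -/
theorem crossing_lower_bound_tverberg (d n : ℕ) (hd : 3 ≤ d) (hn : 3 ≤ n)
    (v : Fin d × Fin n → EuclideanSpace ℝ (Fin d))
    (hinj : Function.Injective v)
    (hgen : ∀ s : Finset (Fin d × Fin n), s.card = d + 1 →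
      AffineIndependent ℝ (fun i : s => v i.1)) :
    (n : ℝ) ^ d * ((n : ℝ) - 1) ^ d / 6 ^ ((d + 1) / 2 + 1) ≤
      ({P : Sym2 (Fin d → Fin n) | ∃ f g : Fin d → Fin n,
          P = s(f, g) ∧ (∀ i : Fin d, f i ≠ g i) ∧
          (intrinsicInterior ℝ (convexHull ℝ (Set.range fun i : Fin d => v (i, f i))) ∩
           intrinsicInterior ℝ (convexHull ℝ (Set.range fun i : Fin d => v (i, g i)))).Nonempty} :
        Set (Sym2 (Fin d → Fin n))).ncard := by
  classical
  obtain ⟨e, rfl⟩ : ∃ e, d = e + 2 := ⟨d - 2, by omega⟩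
  set Q : Set (Sym2 (Fin (e + 2) → Fin n)) := _ with hQ
  show _ ≤ (Q.ncard : ℝ)
  let N : Finset ((Fin (e + 2) → Fin n) × (Fin (e + 2) → Fin n)) :=
    Finset.univ.filter (fun x => Crs v x.1 x.2)
  have hc := count_ordered v (by nlinarith) hgen N (by simp [N])
  have hfin : Q.Finite := Set.toFinite _
  have h2 : N.card ≤ 2 * Q.ncard := by
    rw [Set.ncard_eq_toFinset_card Q hfin]
    apply Finset.card_le_mul_card_image_of_maps_to (f := fun x => s(x.1, x.2))
    · rintro ⟨f, g⟩ hx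
      have hx' : Crs v f g := by simpa [N] using hx
      rw [Set.Finite.mem_toFinset]
      exact ⟨f, g, rfl, hx'⟩
    · intro b _
      induction b using Sym2.ind with
      | _ x y =>
      refine le_trans (Finset.card_le_card (t := {(x, y), (y, x)}) ?_) Finset.card_le_two
      rintro ⟨f, g⟩ h
      simp only [Finset.mem_filter, Sym2.eq_iff] at h
      simp only [Finset.mem_insert, Finset.mem_singleton, Prod.mk.injEq]
      exact h.2
  have h3 : (n * (n - 1)) ^ (e + 2) ≤ 36 * 2 ^ e * Q.ncard := by
    have hp : 0 < (n - 2) ^ (e + 2) := pow_pos (by omega) _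
    rw [mul_pow (n * (n - 1))] at hc
    have h4 : (n - 2) ^ (e + 2) * (36 * 2 ^ e * N.card)
        ≤ (n - 2) ^ (e + 2) * (36 * 2 ^ e * (2 * Q.ncard)) := by gcongr
    have h5 : (n - 2) ^ (e + 2) * (2 * (n * (n - 1)) ^ (e + 2)) ≤
        (n - 2) ^ (e + 2) * (2 * (36 * 2 ^ e * Q.ncard)) := by
      calc _ = 2 * ((n * (n - 1)) ^ (e + 2) * (n - 2) ^ (e + 2)) := by ring
        _ ≤ _ := hc.trans h4
        _ = _ := by ring
    have := Nat.le_of_mul_le_mul_left h5 hp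
    omega
  have h4 : (n * (n - 1)) ^ (e + 2) ≤ 6 ^ ((e + 2 + 1) / 2 + 1) * Q.ncard :=
    h3.trans (Nat.mul_le_mul_right _ (pow_bound e))
  rw [div_le_iff₀ (by positivity), ← mul_pow]
  have h5 : (((n * (n - 1)) ^ (e + 2) : ℕ) : ℝ) ≤ ((6 ^ ((e + 2 + 1) / 2 + 1) * Q.ncard : ℕ) : ℝ) := by
    exact_mod_cast h4
  push_cast [Nat.cast_sub (show 1 ≤ n by omega)] at h5
  linarith
end

section
/- Let d ≥ 3 and let v_1, …, v_{2d+2} be 2d+2 points in general position in ℝ^d (every d+1 of them affinely independent), partitioned into d parts L_1 = {v_1, v_2, v_3}, L_2 = {v_4, v_5, v_6}, and L_k = {v_{2k+1}, v_{2k+2}} for 3 ≤ k ≤ d. Then there exist disjoint subsets V_a, V_b ⊆ {v_1, …, v_{2d+2}} satisfying: (i) 2 ≤ |V_a| ≤ d and 2 ≤ |V_b| ≤ d; (ii) |V_a| + |V_b| ≥ d + 2; (iii) |V_a ∩ L_i| ≤ 1 and |V_b ∩ L_i| ≤ 1 for every i with 1 ≤ i ≤ d; and (iv) the convex hulls of V_a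 and V_b contain a common point in their relative (intrinsic) interiors. -/
/-- Part index (0-based) of the `j`-th vertex (0-based) of `K_{2×3+(d-2)×2}^d`:
vertices `0,1,2` form part `0`, vertices `3,4,5` form part `1`, and vertices
`2k, 2k+1` (for `k ≥ 3`) form part `k - 1`. -/
def partIdx (j : ℕ) : ℕ := if j < 3 then 0 else if j < 6 then 1 else j / 2 - 1

/-- The median of three reals. -/
noncomputable def med (x y z : ℝ) : ℝ := max (min x y) (min (max x y) z)

lemma med_neg (x y z : ℝ) : med (-x) (-y) (-z) = -med x y z := by
  unfold med
  grind

lemma med_mul {x y z : ℝ} (h : med x y z = 0) (c : ℝ) : med (c * x) (c * y) (c * z) = 0 := by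
  have key : ∀ c : ℝ, 0 ≤ c → med (c * x) (c * y) (c * z) = 0 := by
    intro c hc
    have : med (c * x) (c * y) (c * z) = c * med x y z := by
      unfold med
      rw [mul_max_of_nonneg _ _ hc, mul_min_of_nonneg _ _ hc, mul_min_of_nonneg _ _ hc,
        mul_max_of_nonneg _ _ hc]
    rw [this, h, mul_zero]
  rcases le_total 0 c with hc | hc
  · exact key c hc
  · have h1 := key (-c) (by linarith)
    have h2 := med_neg (-c * x) (-c * y) (-c * z)
    rw [h1] at h2
    simpa using h2

lemma odd_zero {E : Type*} [NormedAddCommGroup E] (g : E → ℝ) (hg : Continuous g)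
    (hodd : ∀ x, g (-x) = -g x) (S : Set E) (hS : IsPreconnected S) (p : E) (hp : p ∈ S)
    (hp' : -p ∈ S) : ∃ x ∈ S, g x = 0 := by
  rcases le_total (g p) 0 with h | h
  · exact hS.intermediate_value hp hp' hg.continuousOn ⟨h, by rw [hodd]; linarith⟩
  · exact hS.intermediate_value hp' hp hg.continuousOn ⟨by rw [hodd]; linarith, h⟩

lemma core {E : Type*} [NormedAddCommGroup E] [NormedSpace ℝ E] [FiniteDimensional ℝ E]
    (hE : 3 ≤ Module.finrank ℝ E) (A B : E →ₗ[ℝ] (Fin 3 → ℝ)) :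
    ∃ w : E, w ≠ 0 ∧ med (A w 0) (A w 1) (A w 2) = 0 ∧ med (B w 0) (B w 1) (B w 2) = 0 := by
  have hcont : ∀ A : E →ₗ[ℝ] (Fin 3 → ℝ), Continuous fun w => med (A w 0) (A w 1) (A w 2) := by
    intro A
    have := A.continuous_of_finiteDimensional
    unfold med
    fun_prop
  have hodd : ∀ (A : E →ₗ[ℝ] (Fin 3 → ℝ)) (w : E),
      med (A (-w) 0) (A (-w) 1) (A (-w) 2) = -med (A w 0) (A w 1) (A w 2) := by
    intro A w
    rw [← med_neg]
    simp
  have hseg : ∀ p q : E, IsPreconnected (segment ℝ p q) := fun p q =>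
    (convex_segment p q).isPreconnected
  by_cases hsurj : Function.Surjective A
  · obtain ⟨x, hx⟩ := hsurj ![1, 0, 0]
    obtain ⟨y, hy⟩ := hsurj ![0, 1, 0]
    obtain ⟨z, hz⟩ := hsurj ![0, 0, 1]
    have hS : IsPreconnected ((segment ℝ x (-z) ∪ segment ℝ (-z) y) ∪ segment ℝ y (-x)) := by
      refine IsPreconnected.union y (Or.inr (right_mem_segment ℝ _ _)) (left_mem_segment ℝ _ _)
        (IsPreconnected.union (-z) (right_mem_segment ℝ _ _) (left_mem_segment ℝ _ _)
          (hseg _ _) (hseg _ _)) (hseg _ _)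
    obtain ⟨w, hw, hBw⟩ := odd_zero _ (hcont B) (hodd B) _ hS x
      (Or.inl (Or.inl (left_mem_segment ℝ _ _))) (Or.inr (right_mem_segment ℝ _ _))
    have hA : A w ≠ 0 ∧ med (A w 0) (A w 1) (A w 2) = 0 := by
      rcases hw with (⟨s, t, hs, ht, hst, rfl⟩ | ⟨s, t, hs, ht, hst, rfl⟩) |
        ⟨s, t, hs, ht, hst, rfl⟩
      all_goals
        simp only [map_add, map_smul, map_neg, hx, hy, hz]
        constructor
        · intro h
          have h0 := congrFun h 0
          have h1 := congrFun h 1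
          have h2 := congrFun h 2
          simp at h0 h1 h2
          linarith
        · simp [med]
          try grind
    refine ⟨w, ?_, hA.2, hBw⟩
    rintro rfl
    exact hA.1 (map_zero A)
  · obtain ⟨k, hk, hk0⟩ : ∃ k, A k = 0 ∧ k ≠ 0 := by
      by_contra! hcon
      have hinj : Function.Injective A := (injective_iff_map_eq_zero A).2 hcon
      have h1 := LinearMap.finrank_le_finrank_of_injective hinj
      have h2 : Module.finrank ℝ E = Module.finrank ℝ (Fin 3 → ℝ) := by
        simp at h1 ⊢; omega
      exact hsurj ((LinearMap.injective_iff_surjective_of_finrank_eq_finrank h2).1 hinj)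
    have hex : ∀ a b : E, ∃ u, u ∉ Submodule.span ℝ {a, b} := by
      intro a b
      by_contra! hcon
      have htop : Submodule.span ℝ {a, b} = ⊤ := Submodule.eq_top_iff'.2 hcon
      classical
      have h1 := finrank_span_finset_le_card (R := ℝ) ({a, b} : Finset E)
      have h2 : ({a, b} : Finset E).card ≤ 2 := Finset.card_le_two
      unfold Set.finrank at h1
      rw [Finset.coe_pair, htop, finrank_top] at h1
      omega
    obtain ⟨u, hu⟩ := hex k k
    obtain ⟨u', hu'⟩ := hex k u
    have hlin : ∀ s t c : ℝ, s • u + t • u' = c • k → s = 0 ∧ t = 0 := by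
      intro s t c h
      have ht : t = 0 := by
        by_contra ht
        apply hu'
        rw [Submodule.mem_span_pair]
        refine ⟨t⁻¹ * c, -(t⁻¹ * s), ?_⟩
        have : u' = t⁻¹ • (c • k - s • u) := by
          rw [← h]; simp [smul_smul, ht]
        rw [this]; module
      refine ⟨?_, ht⟩
      by_contra hs
      apply hu
      rw [Submodule.mem_span_pair]
      refine ⟨s⁻¹ * c, 0, ?_⟩
      subst ht
      have : u = s⁻¹ • (c • k) := by
        rw [← h]; simp [smul_smul, hs]
      rw [this]; module
    have hS : IsPreconnected (segment ℝ u u' ∪ segment ℝ u' (-u)) :=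
      IsPreconnected.union u' (right_mem_segment ℝ _ _) (left_mem_segment ℝ _ _)
          (hseg _ _) (hseg _ _)
    obtain ⟨p, hp, hAp⟩ := odd_zero _ (hcont A) (hodd A) _ hS u
      (Or.inl (left_mem_segment ℝ _ _)) (Or.inr (right_mem_segment ℝ _ _))
    have hpk : ∀ c : ℝ, p ≠ c • k := by
      rintro c rfl
      rcases hp with ⟨s, t, hs, ht, hst, h⟩ | ⟨s, t, hs, ht, hst, h⟩
      · have := hlin s t c h
        linarith
      · have := hlin (-t) s c (by rw [← h]; module)
        linarith
    have hlin2 : ∀ s t : ℝ, s • p + t • k = 0 → s = 0 ∧ t = 0 := by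
      intro s t h
      have hs : s = 0 := by
        by_contra hs
        apply hpk (-(s⁻¹ * t))
        have : p = s⁻¹ • (s • p) := by simp [smul_smul, hs]
        rw [this, eq_neg_of_add_eq_zero_left h]
        module
      subst hs
      simpa [hk0] using h
    have hS2 : IsPreconnected (segment ℝ p k ∪ segment ℝ k (-p)) :=
      IsPreconnected.union k (right_mem_segment ℝ _ _) (left_mem_segment ℝ _ _)
          (hseg _ _) (hseg _ _)
    obtain ⟨w, hw, hBw⟩ := odd_zero _ (hcont B) (hodd B) _ hS2 p
      (Or.inl (left_mem_segment ℝ _ _)) (Or.inr (right_mem_segment ℝ _ _))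
    obtain ⟨s, t, hst, rfl⟩ : ∃ s t : ℝ, ¬ (s = 0 ∧ t = 0) ∧ w = s • p + t • k := by
      rcases hw with ⟨s, t, hs, ht, hst, h⟩ | ⟨s, t, hs, ht, hst, h⟩
      · exact ⟨s, t, fun h => by linarith, h.symm⟩
      · exact ⟨-t, s, fun h => by linarith, by rw [← h]; module⟩
    refine ⟨_, fun h => hst (hlin2 _ _ h), ?_, hBw⟩
    simpa [hk] using med_mul hAp s

lemma relint {E : Type*} [NormedAddCommGroup E] [NormedSpace ℝ E] [FiniteDimensional ℝ E]
    (T : Finset E) (w : E → ℝ) (hw : ∀ e ∈ T, 0 < w e) (hw1 : ∑ e ∈ T, w e = 1) :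
    ∑ e ∈ T, w e • e ∈ intrinsicInterior ℝ (convexHull ℝ (T : Set E)) := by
  set x := ∑ e ∈ T, w e • e with hx
  have hT : T.Nonempty := by
    by_contra h
    rw [Finset.not_nonempty_iff_eq_empty] at h
    simp [h] at hw1
  set C := convexHull ℝ (T : Set E) with hC
  have hconv : Convex ℝ C := convex_convexHull ℝ _
  have hxC : x ∈ C := by
    rw [hC, Finset.mem_convexHull']
    exact ⟨w, fun e he => (hw e he).le, hw1, rfl⟩
  obtain ⟨y, hy⟩ := Set.Nonempty.intrinsicInterior hconv
    ((Finset.coe_nonempty.2 hT).convexHull (𝕜 := ℝ))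
  have hyC : y ∈ C := intrinsicInterior_subset hy
  obtain ⟨u, hu0, hu1, hu⟩ := Finset.mem_convexHull'.1 hyC
  obtain ⟨e0, he0, hmin⟩ := T.exists_min_image w hT
  set ε := w e0 with hε
  have hεpos : 0 < ε := hw e0 he0
  have hule : ∀ e ∈ T, u e ≤ 1 := fun e he => by
    rw [← hu1]; exact Finset.single_le_sum hu0 he
  set z := (1 + ε) • x - ε • y with hz
  have hzC : z ∈ C := by
    rw [hC, Finset.mem_convexHull']
    refine ⟨fun e => (1 + ε) * w e - ε * u e, fun e he => ?_, ?_, ?_⟩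
    · have h1 := hmin e he
      have h2 := hule e he
      have h3 := hw e he
      have : ε * u e ≤ ε * 1 := by gcongr
      have : 0 < ε * w e := by positivity
      dsimp only
      linarith
    · rw [Finset.sum_sub_distrib, ← Finset.mul_sum, ← Finset.mul_sum, hw1, hu1]; ring
    · simp only [sub_smul, mul_smul]
      rw [Finset.sum_sub_distrib, ← Finset.smul_sum, ← Finset.smul_sum, hu]
  have hspan : C ⊆ affineSpan ℝ C := subset_affineSpan ℝ C
  rw [mem_intrinsicInterior] at hy ⊢
  obtain ⟨y', hy', rfl⟩ := hy
  rw [mem_interior_iff_mem_nhds, Metric.mem_nhds_iff] at hy'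
  obtain ⟨δ, hδ, hball⟩ := hy'
  refine ⟨⟨x, hspan hxC⟩, ?_, rfl⟩
  rw [mem_interior_iff_mem_nhds, Metric.mem_nhds_iff]
  refine ⟨δ * ε / (1 + ε), by positivity, ?_⟩
  rintro ⟨p, hp⟩ hpx
  rw [Metric.mem_ball, Subtype.dist_eq, dist_eq_norm] at hpx
  change p ∈ C
  set r := (1 + ε) / ε with hr
  have hqspan : AffineMap.lineMap z p r ∈ affineSpan ℝ C :=
    AffineMap.lineMap_mem r (hspan hzC) hp
  have hq : AffineMap.lineMap z p r - (y' : E) = r • (p - x) := by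
    rw [AffineMap.lineMap_apply_module, hz, hr]
    match_scalars <;> field_simp <;> ring
  have hqC : AffineMap.lineMap z p r ∈ C := by
    have : (⟨_, hqspan⟩ : affineSpan ℝ C) ∈ Metric.ball y' δ := by
      rw [Metric.mem_ball, Subtype.dist_eq, dist_eq_norm, hq, norm_smul, Real.norm_eq_abs,
        abs_of_pos (by positivity), hr]
      calc (1 + ε) / ε * ‖p - x‖ < (1 + ε) / ε * (δ * ε / (1 + ε)) := by gcongr
        _ = δ := by field_simp
    exact hball this
  have hpq : p = (1 / (1 + ε)) • z + (ε / (1 + ε)) • AffineMap.lineMap z p r := by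
    rw [AffineMap.lineMap_apply_module, hr]
    match_scalars <;> field_simp <;> ring
  rw [hpq]
  exact hconv hzC hqC (by positivity) (by positivity) (by field_simp)

lemma relint_idx {E ι : Type*} [Nonempty ι] [NormedAddCommGroup E] [NormedSpace ℝ E]
    [FiniteDimensional ℝ E]
    (v : ι → E) (hv : Function.Injective v) (T : Finset ι) (w : ι → ℝ) (hw : ∀ e ∈ T, 0 < w e)
    (hw1 : ∑ e ∈ T, w e = 1) :
    ∑ e ∈ T, w e • v e ∈ intrinsicInterior ℝ (convexHull ℝ (v '' (T : Set ι))) := by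
  classical
  have hli : ∀ i, Function.invFun v (v i) = i := Function.leftInverse_invFun hv
  have := relint (T.image v) (fun e => w (Function.invFun v e)) (by
    intro e he
    obtain ⟨i, hi, rfl⟩ := Finset.mem_image.1 he
    simpa [hli] using hw i hi) (by
    rw [Finset.sum_image hv.injOn]; simpa [hli] using hw1)
  rw [Finset.sum_image hv.injOn] at this
  simpa [hli] using this

lemma med_pos {x y z : ℝ} (h : med x y z = 0) :
    ¬ (0 < x ∧ 0 < y) ∧ ¬ (0 < x ∧ 0 < z) ∧ ¬ (0 < y ∧ 0 < z) := by
  unfold med at h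
  grind

/-- Nonpositivity conditions force at most one positive coordinate in each part. -/
lemma part_inj (d : ℕ) (hd : 3 ≤ d) (w : Fin (2 * d + 2) → ℝ)
    (h0 : med (w ⟨0, by omega⟩) (w ⟨1, by omega⟩) (w ⟨2, by omega⟩) = 0)
    (h1 : med (w ⟨3, by omega⟩) (w ⟨4, by omega⟩) (w ⟨5, by omega⟩) = 0)
    (h2 : ∀ k : Fin (d - 2), w ⟨2 * k + 6, by omega⟩ + w ⟨2 * k + 7, by omega⟩ = 0) :
    ∀ i j : Fin (2 * d + 2), partIdx i.val = partIdx j.val → 0 < w i → 0 < w j → i = j := by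
  have key : ∀ i j : Fin (2 * d + 2), i.val < j.val → partIdx i.val = partIdx j.val →
      0 < w i → 0 < w j → False := by
    rintro ⟨i, hi⟩ ⟨j, hj⟩ hij hpart hwi hwj
    have m0 := med_pos h0
    have m1 := med_pos h1
    simp only at hij
    unfold partIdx at hpart
    dsimp only at hpart
    by_cases hj3 : j < 3
    · obtain ⟨rfl, rfl⟩ | ⟨rfl, rfl⟩ | ⟨rfl, rfl⟩ :
        (i = 0 ∧ j = 1) ∨ (i = 0 ∧ j = 2) ∨ (i = 1 ∧ j = 2) := by omega
      · exact m0.1 ⟨hwi, hwj⟩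
      · exact m0.2.1 ⟨hwi, hwj⟩
      · exact m0.2.2 ⟨hwi, hwj⟩
    by_cases hj6 : j < 6
    · obtain ⟨rfl, rfl⟩ | ⟨rfl, rfl⟩ | ⟨rfl, rfl⟩ :
        (i = 3 ∧ j = 4) ∨ (i = 3 ∧ j = 5) ∨ (i = 4 ∧ j = 5) := by
          split_ifs at hpart <;> omega
      · exact m1.1 ⟨hwi, hwj⟩
      · exact m1.2.1 ⟨hwi, hwj⟩
      · exact m1.2.2 ⟨hwi, hwj⟩
    obtain ⟨k, rfl, rfl⟩ : ∃ k, i = 2 * k + 6 ∧ j = 2 * k + 7 :=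
      ⟨i / 2 - 3, by split_ifs at hpart <;> omega, by split_ifs at hpart <;> omega⟩
    have := h2 ⟨k, by omega⟩
    simp only at this
    linarith
  intro i j hp hi hj
  rcases lt_trichotomy i.val j.val with h | h | h
  · exact (key i j h hp hi hj).elim
  · exact Fin.ext h
  · exact (key j i h hp.symm hj hi).elim

lemma card_parts (d : ℕ) (hd : 3 ≤ d) (T : Finset (Fin (2 * d + 2)))
    (h : ∀ i ∈ T, ∀ j ∈ T, partIdx i.val = partIdx j.val → i = j) :
    T.card ≤ d ∧ ∀ i < d, (T.filter fun j => partIdx j.val = i).card ≤ 1 := by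
  constructor
  · have := Finset.card_le_card_of_injOn (s := T) (t := Finset.range d) (fun j => partIdx j.val)
      (by
        rintro ⟨j, hj⟩ _
        simp only [Finset.coe_range, Set.mem_Iio, partIdx]
        split_ifs <;> omega)
      (fun i hi j hj hij => h i hi j hj hij)
    simpa using this
  · intro i _
    rw [Finset.card_le_one]
    intro a ha b hb
    rw [Finset.mem_filter] at ha hb
    exact h a ha.1 b hb.1 (ha.2.trans hb.2.symm)

/-- A linear dependency adapted to the parts. -/
lemma exists_dep (d : ℕ) (hd : 3 ≤ d) (v : Fin (2 * d + 2) → EuclideanSpace ℝ (Fin d)) :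
    ∃ w : Fin (2 * d + 2) → ℝ, w ≠ 0 ∧ ∑ i, w i • v i = 0 ∧ ∑ i, w i = 0 ∧
      med (w ⟨0, by omega⟩) (w ⟨1, by omega⟩) (w ⟨2, by omega⟩) = 0 ∧
      med (w ⟨3, by omega⟩) (w ⟨4, by omega⟩) (w ⟨5, by omega⟩) = 0 ∧
      ∀ k : Fin (d - 2), w ⟨2 * k + 6, by omega⟩ + w ⟨2 * k + 7, by omega⟩ = 0 := by
  let Φ : (Fin (2 * d + 2) → ℝ) →ₗ[ℝ]
      (EuclideanSpace ℝ (Fin d) × ℝ × (Fin (d - 2) → ℝ)) :=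
    { toFun := fun w => (∑ i, w i • v i, ∑ i, w i,
        fun k => w ⟨2 * k + 6, by omega⟩ + w ⟨2 * k + 7, by omega⟩)
      map_add' := by
        intro x y
        ext
        · simp [add_smul, Finset.sum_add_distrib]
        · simp [Finset.sum_add_distrib]
        · simp; ring
      map_smul' := by
        intro c x
        ext
        · simp [mul_assoc, Finset.mul_sum]
        · simp [Finset.mul_sum]
        · simp; ring }
  have hdim : 3 ≤ Module.finrank ℝ (LinearMap.ker Φ) := by
    have h1 := LinearMap.finrank_range_add_finrank_ker Φ
    have h2 := Submodule.finrank_le (LinearMap.range Φ)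
    simp only [Module.finrank_prod, finrank_euclideanSpace, Fintype.card_fin,
      Module.finrank_self, Module.finrank_fin_fun] at h1 h2
    omega
  let A : LinearMap.ker Φ →ₗ[ℝ] (Fin 3 → ℝ) :=
    (LinearMap.funLeft ℝ ℝ (fun k : Fin 3 => (⟨k.val, by omega⟩ : Fin (2 * d + 2)))).comp
      (LinearMap.ker Φ).subtype
  let B : LinearMap.ker Φ →ₗ[ℝ] (Fin 3 → ℝ) :=
    (LinearMap.funLeft ℝ ℝ (fun k : Fin 3 => (⟨k.val + 3, by omega⟩ : Fin (2 * d + 2)))).comp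
      (LinearMap.ker Φ).subtype
  obtain ⟨⟨w, hw⟩, hw0, hA, hB⟩ := core hdim A B
  rw [LinearMap.mem_ker] at hw
  refine ⟨w, fun h => hw0 (Subtype.ext h), congrArg (fun p => p.1) hw,
    congrArg (fun p => p.2.1) hw, hA, hB, fun k => congrFun (congrArg (fun p => p.2.2) hw) k⟩

/-- Let `d ≥ 3` and let `v_1, …, v_{2d+2}` be points in general position
in `ℝ^d` partitioned into parts `L_1 = {v_1,v_2,v_3}`, `L_2 = {v_4,v_5,v_6}` and
`L_k = {v_{2k+1}, v_{2k+2}}` for `3 ≤ k ≤ d`. Then there exist disjoint subsets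
`V_a, V_b` with `2 ≤ |V_a|, |V_b| ≤ d`, `|V_a| + |V_b| ≥ d + 2`, at most one vertex of
each part in each of `V_a` and `V_b`, whose convex hulls share a common point of their
relative (intrinsic) interiors. -/
theorem exists_crossing_subsimplices (d : ℕ) (hd : 3 ≤ d)
    (v : Fin (2 * d + 2) → EuclideanSpace ℝ (Fin d))
    (hinj : Function.Injective v)
    (hgen : ∀ s : Finset (Fin (2 * d + 2)), s.card = d + 1 →
      AffineIndependent ℝ (fun i : s => v i.1)) :
    ∃ Va Vb : Finset (Fin (2 * d + 2)), Disjoint Va Vb ∧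
      2 ≤ Va.card ∧ Va.card ≤ d ∧ 2 ≤ Vb.card ∧ Vb.card ≤ d ∧
      d + 2 ≤ Va.card + Vb.card ∧
      (∀ i < d, (Va.filter fun j => partIdx j.val = i).card ≤ 1) ∧
      (∀ i < d, (Vb.filter fun j => partIdx j.val = i).card ≤ 1) ∧
      (intrinsicInterior ℝ (convexHull ℝ (v '' (Va : Set (Fin (2 * d + 2))))) ∩
        intrinsicInterior ℝ
          (convexHull ℝ (v '' (Vb : Set (Fin (2 * d + 2)))))).Nonempty := by
  classical
  obtain ⟨w, hw0, hwv, hw1, h0, h1, h2⟩ := exists_dep d hd v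
  have hsupp : d + 2 ≤ (Finset.univ.filter fun i => w i ≠ 0).card := by
    by_contra! hlt
    obtain ⟨s, hs, hscard⟩ := Finset.exists_superset_card_eq
      (s := Finset.univ.filter fun i => w i ≠ 0) (n := d + 1) (by omega) (by simp; omega)
    have hz : ∀ i, i ∉ s → w i = 0 := by
      intro i hi
      by_contra h
      exact hi (hs (by simp [h]))
    have hai := affineIndependent_iff.1 (hgen s hscard) Finset.univ (fun i => w i.1)
      (by
        rw [← hw1, Finset.sum_coe_sort s w]
        exact Finset.sum_subset (Finset.subset_univ _) (fun i _ hi => hz i hi))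
      (by
        rw [← hwv, Finset.sum_coe_sort s (fun i => w i • v i)]
        exact Finset.sum_subset (Finset.subset_univ _) (fun i _ hi => by simp [hz i hi]))
    apply hw0
    funext i
    by_cases hi : i ∈ s
    · exact hai ⟨i, hi⟩ (Finset.mem_univ _)
    · exact hz i hi
  set Va := Finset.univ.filter fun i => 0 < w i with hVa
  set Vb := Finset.univ.filter fun i => w i < 0 with hVb
  have hdisj : Disjoint Va Vb := by
    rw [Finset.disjoint_left]
    intro i hi hj
    simp [hVa, hVb] at hi hj
    linarith
  have hun : (Finset.univ.filter fun i => w i ≠ 0) = Va ∪ Vb := by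
    ext i
    simp only [hVa, hVb, Finset.mem_union, Finset.mem_filter, Finset.mem_univ, true_and]
    rw [or_comm]
    exact lt_or_lt_iff_ne.symm
  rw [hun, Finset.card_union_of_disjoint hdisj] at hsupp
  have pa := card_parts d hd Va (fun i hi j hj h =>
    part_inj d hd w h0 h1 h2 i j h (by simpa [hVa] using hi) (by simpa [hVa] using hj))
  have pb := card_parts d hd Vb (fun i hi j hj h =>
    part_inj d hd (-w) (by simp only [Pi.neg_apply]; rw [med_neg, h0, neg_zero])
      (by simp only [Pi.neg_apply]; rw [med_neg, h1, neg_zero])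
      (fun k => by have := h2 k; simp only [Pi.neg_apply]; linarith) i j h
      (by simpa [hVb] using hi) (by simpa [hVb] using hj))
  refine ⟨Va, Vb, hdisj, by omega, pa.1, by omega, pb.1, hsupp, pa.2, pb.2, ?_⟩
  have hsum : ∑ i ∈ Va, w i + ∑ i ∈ Vb, w i = 0 := by
    rw [← Finset.sum_union hdisj, ← hun, Finset.sum_filter_ne_zero]
    exact hw1
  have hsumv : ∑ i ∈ Va, w i • v i + ∑ i ∈ Vb, w i • v i = 0 := by
    rw [← Finset.sum_union hdisj, ← hun, ← hwv]
    refine Finset.sum_subset (Finset.subset_univ _) (fun i _ hi => ?_)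
    have : w i = 0 := by simpa using hi
    simp [this]
  set σ := ∑ i ∈ Va, w i with hσ
  have hσpos : 0 < σ := Finset.sum_pos (fun i hi => by simpa [hVa] using hi)
    (Finset.card_pos.1 (by omega))
  have ra := relint_idx v hinj Va (fun i => σ⁻¹ * w i)
    (fun i hi => mul_pos (inv_pos.2 hσpos) (by simpa [hVa] using hi))
    (by rw [← Finset.mul_sum, ← hσ]; field_simp)
  have rb := relint_idx v hinj Vb (fun i => σ⁻¹ * (-w i))
    (fun i hi => mul_pos (inv_pos.2 hσpos) (by simpa [hVb] using hi))
    (by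
      rw [← Finset.mul_sum, Finset.sum_neg_distrib, ← eq_neg_of_add_eq_zero_left hsum]
      field_simp)
  refine ⟨_, ra, ?_⟩
  convert rb using 1
  simp only [mul_smul, neg_smul]
  rw [← Finset.smul_sum, ← Finset.smul_sum, Finset.sum_neg_distrib,
    ← eq_neg_of_add_eq_zero_left hsumv]
end
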